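/- (Sufficient condition, n-dimensional diagonal Hessian case.) Under the n-dimensional diagonal two-step trust-region setup, suppose x̃₁ ≠ x₁ and there are real numbers κ⁽¹⁾, …, κ⁽ⁿ⁾ with κ⁽ⁱ⁾ (x̃₁⁽ⁱ⁾ − x₁⁽ⁱ⁾) = x₁⁽ⁱ⁾ − x₀⁽ⁱ⁾ for every i. Let 0 ≤ ε ≤ 1. If for every i ∈ {1, …, n} either [(b⁽ⁱ⁾ + ω̃₂)ω₁ > (a⁽ⁱ⁾ + ω₂)ω̃₁ and κ₁⁽ⁱ⁾ ≤ κ⁽ⁱ⁾ ≤ κ₂⁽ⁱ⁾] or [(b⁽ⁱ⁾ + ω̃₂)ω₁ < (a⁽ⁱ⁾ + ω₂)ω̃₁ and κ₂⁽ⁱ⁾ ≤ κ⁽ⁱ⁾ ≤ κ₁⁽ⁱ⁾], where κ₁⁽ⁱ⁾ = (a⁽ⁱ⁾ + ω₂)[(1 − ε)(b⁽ⁱ⁾ + ω̃₂) + ω̃₁] / [(b⁽ⁱ⁾ + ω̃₂)ω₁ − (a⁽ⁱ⁾ + ω₂)ω̃₁] and κ₂⁽ⁱ⁾ = (a⁽ⁱ⁾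 + ω₂)[(1 + ε)(b⁽ⁱ⁾ + ω̃₂) + ω̃₁] / [(b⁽ⁱ⁾ + ω̃₂)ω₁ − (a⁽ⁱ⁾ + ω₂)ω̃₁], then ‖x̃₂ − x₂‖₂ ≤ ε ‖x̃₁ − x₁‖₂ in the Euclidean norm. -/

import Mathlib

/-!
For a quadratic model with Hessian `A`, the gradient at the first iterate `x₁` is
`-ω₁ (x₁ - x₀)`, so the second step is the linear function `ω₁ (A + ω₂ I)⁻¹ (x₁ - x₀)` of the first.
When the Hessians are diagonal and `x₁ - x₀` is coordinatewise `κ` times the gap `x̃₁ - x₁`, each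
coordinate of the gap is multiplied by a factor affine in `κ`; the endpoints `κ₁`, `κ₂` are the
solutions of `factor = ε` and `factor = -ε`.
-/

open Matrix WithLp
open scoped ENNReal

/-- The iterate `x - (A + ω I)⁻¹ g` of a trust-region method whose model at `x` has gradient `g` and
Hessian `A`, with `ω` the multiplier of the trust-region constraint. As `⁻¹` is the matrix inverse,
the iterate is `x` itself when `A + ω I` is singular. -/
noncomputable def trustRegionStep {ι R : Type*} [Fintype ι] [DecidableEq ι] [CommRing R]
    (A : Matrix ι ι R) (ω : R) (x g : ι → R) : ι → R :=
  x - (A + ω • 1)⁻¹ *ᵥ g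

theorem diagonal_add_smul_one {ι R : Type*} [DecidableEq ι] [Semiring R] (a : ι → R) (ω : R) :
    diagonal a + ω • (1 : Matrix ι ι R) = diagonal fun i => a i + ω := by
  rw [smul_one_eq_diagonal, diagonal_add]

section Step

variable {ι : Type*} [Fintype ι] [DecidableEq ι]

theorem gradient_trustRegionStep {R : Type*} [CommRing R] {A : Matrix ι ι R} {ω : R}
    (hA : IsUnit (A + ω • 1)) (x g : ι → R) :
    g + A *ᵥ (trustRegionStep A ω x g - x) = -(ω • (trustRegionStep A ω x g - x)) := by
  have hstep : (A + ω • 1) *ᵥ (trustRegionStep A ω x g - x) = -g := by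
    rw [trustRegionStep, sub_sub_cancel_left, mulVec_neg, mulVec_mulVec,
      mul_nonsing_inv _ ((isUnit_iff_isUnit_det _).1 hA), one_mulVec]
  rw [add_mulVec, smul_mulVec, one_mulVec] at hstep
  linear_combination hstep

variable {K : Type*} [Field K] {a : ι → K} {ω : K}

theorem isUnit_diagonal_add_smul_one (ha : ∀ i, a i + ω ≠ 0) :
    IsUnit (diagonal a + ω • (1 : Matrix ι ι K)) := by
  rw [diagonal_add_smul_one, isUnit_diagonal, Pi.isUnit_iff]
  exact fun i => (ha i).isUnit

theorem trustRegionStep_diagonal_apply (ha : ∀ i, a i + ω ≠ 0) (x g : ι → K) (i : ι) :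
    trustRegionStep (diagonal a) ω x g i = x i - g i / (a i + ω) := by
  have hinv : (diagonal a + ω • (1 : Matrix ι ι K))⁻¹ = diagonal fun j => (a j + ω)⁻¹ := by
    refine inv_eq_right_inv ?_
    simp only [diagonal_add_smul_one, diagonal_mul_diagonal, mul_inv_cancel₀ (ha _), diagonal_one]
  rw [trustRegionStep, hinv, Pi.sub_apply, mulVec_diagonal, inv_mul_eq_div]

theorem trustRegionStep_trustRegionStep_diagonal_apply {ω₁ ω₂ : K} {x₀ x₁ g : ι → K}
    (h₁ : ∀ i, a i + ω₁ ≠ 0) (h₂ : ∀ i, a i + ω₂ ≠ 0)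
    (hx₁ : x₁ = trustRegionStep (diagonal a) ω₁ x₀ g) (i : ι) :
    trustRegionStep (diagonal a) ω₂ x₁ (g + diagonal a *ᵥ (x₁ - x₀)) i =
      x₁ i + ω₁ * (x₁ i - x₀ i) / (a i + ω₂) := by
  have hgrad : g + diagonal a *ᵥ (x₁ - x₀) = -(ω₁ • (x₁ - x₀)) := by
    rw [hx₁, gradient_trustRegionStep (isUnit_diagonal_add_smul_one h₁)]
  rw [trustRegionStep_diagonal_apply h₂, hgrad, Pi.neg_apply, neg_div, sub_neg_eq_add,
    Pi.smul_apply, smul_eq_mul, Pi.sub_apply]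

end Step

section Gap

variable {K : Type*} [Field K]

theorem gap_eq_div_mul_gap {α β κ u v x x₁ y₁ : K} (hα : α ≠ 0) (hβ : β ≠ 0)
    (hκ : κ * (y₁ - x₁) = x₁ - x) :
    y₁ + v * (y₁ - x) / β - (x₁ + u * (x₁ - x) / α) =
      -(κ * (β * u - α * v) - α * (β + v)) / (α * β) * (y₁ - x₁) := by
  have hy : y₁ - x = (κ + 1) * (y₁ - x₁) := by linear_combination -hκ
  rw [hy, ← hκ]
  field_simp
  ring

variable [LinearOrder K] [IsStrictOrderedRing K]

theorem abs_sub_le_abs_of_mem_uIcc_sub_add {x p r : K} (hx : x ∈ Set.uIcc (p - r) (p + r)) :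
    |x - p| ≤ |r| := by
  rcases Set.mem_uIcc.1 hx with ⟨hl, hu⟩ | ⟨hl, hu⟩
  · exact (abs_le.2 ⟨by linarith, by linarith⟩).trans (le_abs_self r)
  · exact (abs_le.2 ⟨by linarith, by linarith⟩).trans (neg_le_abs r)

theorem abs_mul_sub_le_abs_of_mem_uIcc_div {D κ p r : K} (hD : D ≠ 0)
    (hκ : κ ∈ Set.uIcc ((p - r) / D) ((p + r) / D)) : |κ * D - p| ≤ |r| := by
  rw [← Set.preimage_mul_const_uIcc hD] at hκ
  exact abs_sub_le_abs_of_mem_uIcc_sub_add hκ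

theorem abs_gap_le_mul_abs_gap {α β κ u v x x₁ y₁ ε : K} (hε : 0 ≤ ε) (hα : α ≠ 0) (hβ : β ≠ 0)
    (hD : β * u ≠ α * v) (hκ : κ * (y₁ - x₁) = x₁ - x)
    (hmem : κ ∈ Set.uIcc (α * ((1 - ε) * β + v) / (β * u - α * v))
      (α * ((1 + ε) * β + v) / (β * u - α * v))) :
    |y₁ + v * (y₁ - x) / β - (x₁ + u * (x₁ - x) / α)| ≤ ε * |y₁ - x₁| := by
  have hlower : α * ((1 - ε) * β + v) = α * (β + v) - ε * (α * β) := by ring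
  have hupper : α * ((1 + ε) * β + v) = α * (β + v) + ε * (α * β) := by ring
  rw [hlower, hupper] at hmem
  have hfactor : |κ * (β * u - α * v) - α * (β + v)| ≤ ε * |α * β| := by
    simpa only [abs_mul ε, abs_of_nonneg hε] using
      abs_mul_sub_le_abs_of_mem_uIcc_div (sub_ne_zero.2 hD) hmem
  rw [gap_eq_div_mul_gap hα hβ hκ, abs_mul, abs_div, abs_neg]
  gcongr
  exact div_le_of_le_mul₀ (abs_nonneg _) hε hfactor

end Gap

theorem norm_piLp_le_norm_piLp {ι : Type*} [Fintype ι] {E F : ι → Type*}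
    [∀ i, SeminormedAddCommGroup (E i)] [∀ i, SeminormedAddCommGroup (F i)]
    {p : ℝ≥0∞} [Fact (1 ≤ p)] {u : PiLp p E} {v : PiLp p F} (h : ∀ i, ‖u i‖ ≤ ‖v i‖) :
    ‖u‖ ≤ ‖v‖ := by
  rcases p.dichotomy with rfl | hp
  · rw [PiLp.norm_eq_ciSup, PiLp.norm_eq_ciSup]
    exact ciSup_mono (Set.finite_range _).bddAbove h
  · have hp₀ : 0 < p.toReal := one_pos.trans_le hp
    rw [PiLp.norm_eq_sum hp₀, PiLp.norm_eq_sum hp₀]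
    gcongr with i
    exact h i

theorem stmt_6_general {ι : Type*} [Fintype ι] [DecidableEq ι] (p : ℝ≥0∞) [Fact (1 ≤ p)]
    {a b gf gQ x₀ x₁ x₁t x₂ x₂t κ κ₁ κ₂ : ι → ℝ} {ω₁ ω₁t ω₂ ω₂t ε : ℝ}
    (ha1 : ∀ i, a i + ω₁ ≠ 0) (hb1 : ∀ i, b i + ω₁t ≠ 0)
    (ha2 : ∀ i, a i + ω₂ ≠ 0) (hb2 : ∀ i, b i + ω₂t ≠ 0)
    (hx₁ : x₁ = trustRegionStep (diagonal a) ω₁ x₀ gf)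
    (hx₁t : x₁t = trustRegionStep (diagonal b) ω₁t x₀ gQ)
    (hx₂ : x₂ = trustRegionStep (diagonal a) ω₂ x₁ (gf + diagonal a *ᵥ (x₁ - x₀)))
    (hx₂t : x₂t = trustRegionStep (diagonal b) ω₂t x₁t (gQ + diagonal b *ᵥ (x₁t - x₀)))
    (hκ : ∀ i, κ i * (x₁t i - x₁ i) = x₁ i - x₀ i) (hε : 0 ≤ ε)
    (hκ₁ : ∀ i, κ₁ i = (a i + ω₂) * ((1 - ε) * (b i + ω₂t) + ω₁t) /
      ((b i + ω₂t) * ω₁ - (a i + ω₂) * ω₁t))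
    (hκ₂ : ∀ i, κ₂ i = (a i + ω₂) * ((1 + ε) * (b i + ω₂t) + ω₁t) /
      ((b i + ω₂t) * ω₁ - (a i + ω₂) * ω₁t))
    (hD : ∀ i, (b i + ω₂t) * ω₁ ≠ (a i + ω₂) * ω₁t) (hmem : ∀ i, κ i ∈ Set.uIcc (κ₁ i) (κ₂ i)) :
    ‖toLp p (x₂t - x₂)‖ ≤ ε * ‖toLp p (x₁t - x₁)‖ := by
  have hgap : ∀ i, |x₂t i - x₂ i| ≤ ε * |x₁t i - x₁ i| := fun i => by
    rw [hx₂, hx₂t, trustRegionStep_trustRegionStep_diagonal_apply ha1 ha2 hx₁,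
      trustRegionStep_trustRegionStep_diagonal_apply hb1 hb2 hx₁t]
    exact abs_gap_le_mul_abs_gap hε (ha2 i) (hb2 i) (hD i) (hκ i) (hκ₁ i ▸ hκ₂ i ▸ hmem i)
  calc ‖toLp p (x₂t - x₂)‖ ≤ ‖ε • toLp p (x₁t - x₁)‖ := norm_piLp_le_norm_piLp fun i => by
        simpa [abs_mul, abs_of_nonneg hε] using hgap i
    _ = ε * ‖toLp p (x₁t - x₁)‖ := by rw [norm_smul, Real.norm_of_nonneg hε]

/-- Sufficient condition for distance reduction in the `n`-dimensional
diagonal-Hessian two-step trust-region setting. -/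
theorem stmt_6 (n : ℕ) (hn : 1 ≤ n) (a b : Fin n → ℝ) (gf gQ x₀ : Fin n → ℝ)
    (ω₁ ω₁t ω₂ ω₂t ε : ℝ)
    (hω₁ : 0 < ω₁) (hω₁t : 0 < ω₁t) (hω₂ : 0 < ω₂) (hω₂t : 0 < ω₂t)
    (ha1 : ∀ i, a i + ω₁ ≠ 0) (hb1 : ∀ i, b i + ω₁t ≠ 0)
    (ha2 : ∀ i, 0 < a i + ω₂) (hb2 : ∀ i, 0 < b i + ω₂t)
    (x₁ x₁t x₂ x₂t : Fin n → ℝ)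
    (hx₁ : x₁ = x₀ - (Matrix.diagonal a + ω₁ • 1)⁻¹.mulVec gf)
    (hx₁t : x₁t = x₀ - (Matrix.diagonal b + ω₁t • 1)⁻¹.mulVec gQ)
    (hx₂ : x₂ = x₁ -
      (Matrix.diagonal a + ω₂ • 1)⁻¹.mulVec (gf + (Matrix.diagonal a).mulVec (x₁ - x₀)))
    (hx₂t : x₂t = x₁t -
      (Matrix.diagonal b + ω₂t • 1)⁻¹.mulVec (gQ + (Matrix.diagonal b).mulVec (x₁t - x₀)))
    (hne : x₁t ≠ x₁)
    (κ : Fin n → ℝ) (hκ : ∀ i, κ i * (x₁t i - x₁ i) = x₁ i - x₀ i)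
    (hε : 0 ≤ ε) (hε1 : ε ≤ 1)
    (κ₁ κ₂ : Fin n → ℝ)
    (hκ₁ : ∀ i, κ₁ i = (a i + ω₂) * ((1 - ε) * (b i + ω₂t) + ω₁t) /
      ((b i + ω₂t) * ω₁ - (a i + ω₂) * ω₁t))
    (hκ₂ : ∀ i, κ₂ i = (a i + ω₂) * ((1 + ε) * (b i + ω₂t) + ω₁t) /
      ((b i + ω₂t) * ω₁ - (a i + ω₂) * ω₁t))
    (hcond : ∀ i,
      ((b i + ω₂t) * ω₁ > (a i + ω₂) * ω₁t ∧ κ₁ i ≤ κ i ∧ κ i ≤ κ₂ i) ∨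
      ((b i + ω₂t) * ω₁ < (a i + ω₂) * ω₁t ∧ κ₂ i ≤ κ i ∧ κ i ≤ κ₁ i)) :
    ‖(WithLp.equiv 2 (Fin n → ℝ)).symm (x₂t - x₂)‖ ≤
      ε * ‖(WithLp.equiv 2 (Fin n → ℝ)).symm (x₁t - x₁)‖ := by
  exact stmt_6_general 2 ha1 hb1 (fun i => (ha2 i).ne') (fun i => (hb2 i).ne') hx₁ hx₁t hx₂ hx₂t hκ
    hε hκ₁ hκ₂ (fun i => (hcond i).elim (fun h => h.1.ne') (fun h => h.1.ne))
    (fun i => Set.mem_uIcc.2 ((hcond i).imp And.right And.right))
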